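/- Let ε ∈ (0,1), α ∈ (0,1), Q ∈ (0, ε]. Let f and g be holomorphic on the open unit disc such that f, f′, g, g′ extend continuously to the closed unit disc with sup_{|z|≤1}|f′(z)| ≤ (1−ε)/2 and sup_{|z|≤1}|g′(z)| ≤ (1−ε)/2, and set Φ_f(w) = w + Q/w + f(w), Φ_g(w) = w + Q/w + g(w) for w ∈ 𝕋. Define, for h holomorphic on the disc with h′ continuous up to the closed disc, I₁(f)h(w) = (1/(2πi))∮_{|ξ|=1} (conj(Φ_f(ξ)) − conj(Φ_f(w)))/(Φ_f(ξ) − Φ_f(w)) h′(ξ) dξ, and analogously I₁(g)h. Then there is a constant C = C(ε, α), independent of f, g, Q and h, such that ‖I₁(f)h − I₁(g)h‖_{C^α(𝕋)} ≤ C·( sup_{|z|≤1}|f′(z) − g′(z)| )·( sup_{ξ∈𝕋}|h′(ξ)| ). -/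

import Mathlib

open Metric

/-- The singular integral `I₁(f)h(w) = (1/2πi)∮_{|ξ|=1}
(conj Φ_f(ξ) - conj Φ_f(w))/(Φ_f(ξ) - Φ_f(w)) · h'(ξ) dξ` with
`Φ_f(w) = w + Q/w + f(w)`. -/
noncomputable def I1Int (Q : ℝ) (f h' : ℂ → ℂ) (w : ℂ) : ℂ :=
  (∮ ξ in C(0, 1),
      (starRingEnd ℂ (ξ + (Q : ℂ) / ξ + f ξ) - starRingEnd ℂ (w + (Q : ℂ) / w + f w)) /
        ((ξ + (Q : ℂ) / ξ + f ξ) - (w + (Q : ℂ) / w + f w)) * h' ξ) /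
    (2 * Real.pi * Complex.I)

open MeasureTheory Set Complex

/-- A function on the closed unit disc, differentiable inside with derivative bounded by `B`, is
`B`-Lipschitz up to the boundary. -/
theorem norm_sub_le_of_hasDerivAt_ball {f f' : ℂ → ℂ} {B : ℝ}
    (hc : ContinuousOn f (closedBall (0 : ℂ) 1))
    (hd : ∀ z ∈ ball (0 : ℂ) 1, HasDerivAt f (f' z) z)
    (hB : ∀ z ∈ closedBall (0 : ℂ) 1, ‖f' z‖ ≤ B) {z w : ℂ}
    (hz : z ∈ closedBall (0 : ℂ) 1) (hw : w ∈ closedBall (0 : ℂ) 1) :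
    ‖f z - f w‖ ≤ B * ‖z - w‖ := by
  have hB0 : 0 ≤ B := (norm_nonneg _).trans (hB z hz)
  have hcl : closure (ball (0 : ℂ) 1) = closedBall 0 1 := closure_ball _ one_ne_zero
  have hlip : LipschitzOnWith B.toNNReal f (ball (0 : ℂ) 1) := by
    rw [lipschitzOnWith_iff_norm_sub_le]
    intro x hx y hy
    rw [Real.coe_toNNReal _ hB0]
    exact Convex.norm_image_sub_le_of_norm_hasDerivWithin_le
      (fun u hu => (hd u hu).hasDerivWithinAt) (fun u hu => hB u (ball_subset_closedBall hu))
      (convex_ball _ _) hy hx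
  have hlip' := LipschitzOnWith.closure (hcl ▸ hc) hlip
  rw [hcl, lipschitzOnWith_iff_norm_sub_le] at hlip'
  simpa [Real.coe_toNNReal _ hB0] using hlip' hz hw

/-- The chordal kernel `|e^{iθ} - 1|^{-α}` is integrable over any interval when `0 < α < 1`. -/
theorem intervalIntegrable_norm_circleMap_sub_one_rpow {α : ℝ} (hα : α ∈ Ioo (0 : ℝ) 1)
    (a b : ℝ) :
    IntervalIntegrable (fun θ : ℝ => ‖circleMap 0 1 θ - 1‖ ^ (-α)) volume a b := by
  have hform : ∀ θ : ℝ, ‖circleMap 0 1 θ - 1‖ = |2 * Real.sin (θ / 2)| := by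
    intro θ
    rw [← Real.norm_eq_abs, ← norm_exp_I_mul_ofReal_sub_one]
    simp [circleMap, mul_comm]
  have hhalf : IntervalIntegrable (fun θ : ℝ => ‖circleMap 0 1 θ - 1‖ ^ (-α)) volume 0 Real.pi := by
    have hg : IntervalIntegrable (fun θ : ℝ => (2 / Real.pi) ^ (-α) * θ ^ (-α)) volume 0 Real.pi :=
      (intervalIntegral.intervalIntegrable_rpow' (by linarith [hα.2])).const_mul _
    refine hg.mono_fun (Measurable.aestronglyMeasurable ?_) ?_
    · have : Continuous fun θ : ℝ => ‖circleMap 0 1 θ - 1‖ := by fun_prop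
      exact this.measurable.pow_const _
    · refine (ae_restrict_iff' measurableSet_uIoc).2 (Filter.Eventually.of_forall fun θ hθ => ?_)
      rw [uIoc_of_le Real.pi_pos.le] at hθ
      have hsin : 2 / Real.pi * (θ / 2) ≤ Real.sin (θ / 2) :=
        Real.mul_le_sin (by linarith [hθ.1]) (by linarith [hθ.2])
      have hpos : 0 < 2 / Real.pi * θ := mul_pos (by positivity) hθ.1
      have hle : 2 / Real.pi * θ ≤ ‖circleMap 0 1 θ - 1‖ := by
        rw [hform]
        refine le_trans ?_ (le_abs_self _)
        linarith
      beta_reduce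
      rw [← Real.mul_rpow (by positivity) hθ.1.le, Real.norm_of_nonneg (by positivity),
        Real.norm_of_nonneg (by positivity)]
      exact Real.rpow_le_rpow_of_nonpos hpos hle (by linarith [hα.1])
  have hneg : IntervalIntegrable (fun θ : ℝ => ‖circleMap 0 1 θ - 1‖ ^ (-α)) volume
      (-Real.pi) 0 := by
    have := (IntervalIntegrable.iff_comp_neg).1 hhalf
    simp only [hform, neg_div, Real.sin_neg, mul_neg, abs_neg, neg_zero] at this ⊢
    exact this.symm
  have hper : Function.Periodic (fun θ : ℝ => ‖circleMap 0 1 θ - 1‖ ^ (-α)) (2 * Real.pi) :=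
    fun θ => by simp only [periodic_circleMap 0 1 θ]
  refine hper.intervalIntegrable (t := -Real.pi) (by positivity) ?_ a b
  rw [show -Real.pi + 2 * Real.pi = Real.pi by ring]
  exact hneg.trans hhalf

/-- A circle integral whose integrand is dominated by a multiple of `|ξ - w|^{-α}` is bounded
uniformly in the singular point `w`. -/
theorem norm_circleIntegral_le_of_mul_rpow_le {α : ℝ} (hα : α ∈ Ioo (0 : ℝ) 1) {G : ℂ → ℂ}
    {B : ℝ} {w : ℂ} (hw : w ∈ sphere (0 : ℂ) 1)
    (hG : ∀ ξ ∈ sphere (0 : ℂ) 1, ‖G ξ‖ * ‖ξ - w‖ ^ α ≤ B) :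
    ‖∮ ξ in C(0, 1), G ξ‖ ≤
      B * ∫ θ in (0 : ℝ)..2 * Real.pi, ‖circleMap 0 1 θ - 1‖ ^ (-α) := by
  obtain ⟨φ, rfl⟩ : ∃ φ : ℝ, circleMap 0 1 φ = w := by
    have : w ∈ range (circleMap 0 1) := by rwa [range_circleMap, abs_one]
    exact this
  have hshift : ∀ θ : ℝ,
      ‖circleMap 0 1 θ - circleMap 0 1 φ‖ = ‖circleMap 0 1 (θ - φ) - 1‖ := by
    intro θ
    have : circleMap 0 1 θ - circleMap 0 1 φ =
        circleMap 0 1 φ * (circleMap 0 1 (θ - φ) - 1) := by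
      simp only [circleMap, zero_add, ofReal_one, one_mul, mul_sub, mul_one, ← Complex.exp_add]
      push_cast
      ring_nf
    rw [this, norm_mul, norm_circleMap_zero, abs_one, one_mul]
  have hper : Function.Periodic (fun θ : ℝ => ‖circleMap 0 1 θ - 1‖ ^ (-α)) (2 * Real.pi) :=
    fun θ => by simp only [periodic_circleMap 0 1 θ]
  have hint : ∫ θ in (0 : ℝ)..2 * Real.pi, ‖circleMap 0 1 (θ - φ) - 1‖ ^ (-α) =
      ∫ θ in (0 : ℝ)..2 * Real.pi, ‖circleMap 0 1 θ - 1‖ ^ (-α) := by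
    rw [intervalIntegral.integral_comp_sub_right (fun θ : ℝ => ‖circleMap 0 1 θ - 1‖ ^ (-α)) φ]
    have := hper.intervalIntegral_add_eq (0 - φ) 0
    rwa [zero_add, show 0 - φ + 2 * Real.pi = 2 * Real.pi - φ by ring] at this
  rw [← hint, ← intervalIntegral.integral_const_mul, circleIntegral]
  have hk : IntervalIntegrable (fun θ : ℝ => ‖circleMap 0 1 (θ - φ) - 1‖ ^ (-α)) volume 0
      (2 * Real.pi) := by
    simpa using (intervalIntegrable_norm_circleMap_sub_one_rpow hα (0 - φ)
      (2 * Real.pi - φ)).comp_sub_right φ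
  refine intervalIntegral.norm_integral_le_of_norm_le Real.two_pi_pos.le ?_ (hk.const_mul B)
  have hae : ∀ᵐ θ : ℝ, θ ∉ circleMap 0 1 ⁻¹' {circleMap 0 1 φ} :=
    ((countable_singleton _).preimage_circleMap 0 one_ne_zero).ae_notMem _
  filter_upwards [hae] with θ hθ _
  have hne : circleMap 0 1 θ - circleMap 0 1 φ ≠ 0 := sub_ne_zero.2 hθ
  have hpos : 0 < ‖circleMap 0 1 θ - circleMap 0 1 φ‖ := norm_pos_iff.2 hne
  rw [norm_smul, ← hshift, Real.rpow_neg hpos.le, ← div_eq_mul_inv, le_div_iff₀ (by positivity)]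
  simpa using hG _ (circleMap_mem_sphere 0 zero_le_one θ)

/-- Interpolation between a uniform bound and a weighted bound. -/
theorem mul_rpow_le_of_le_of_mul_le {α x r t A : ℝ} (hα : α ∈ Ioo (0 : ℝ) 1) (hx : 0 ≤ x)
    (hr : 0 ≤ r) (ht : 0 ≤ t) (hxA : x ≤ A) (hxr : x * r ≤ A * t) : x * r ^ α ≤ A * t ^ α := by
  have hA : 0 ≤ A := hx.trans hxA
  have hsplit : ∀ y s : ℝ, 0 ≤ y → 0 ≤ s → y * s ^ α = y ^ (1 - α) * (y * s) ^ α := by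
    intro y s hy hs
    rw [Real.mul_rpow hy hs, ← mul_assoc, ← Real.rpow_add_of_nonneg hy (by linarith [hα.2]) hα.1.le,
      sub_add_cancel, Real.rpow_one]
  rw [hsplit x r hx hr, hsplit A t hA ht]
  gcongr
  · linarith [hα.2]
  · exact hα.1.le

/-- The difference `ā/a - b̄/b` of conjugate quotients. -/
noncomputable def conjQuotSub (a b : ℂ) : ℂ := starRingEnd ℂ a / a - starRingEnd ℂ b / b

theorem norm_conj_div_le_one (a : ℂ) : ‖starRingEnd ℂ a / a‖ ≤ 1 := by
  rw [norm_div, RCLike.norm_conj]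
  exact div_self_le_one _

theorem conjQuotSub_eq {a b : ℂ} (ha : a ≠ 0) (hb : b ≠ 0) :
    conjQuotSub a b =
      starRingEnd ℂ (a - b) / a - (a - b) / a * (starRingEnd ℂ b / b) := by
  rw [conjQuotSub, map_sub]
  field_simp
  ring

theorem norm_conjQuotSub_le {a b : ℂ} {c m r : ℝ} (hc : 0 < c) (hr : 0 ≤ r) (hm : 0 ≤ m)
    (ha : c * r ≤ ‖a‖) (hb : c * r ≤ ‖b‖) (hab : ‖a - b‖ ≤ m * r) :
    ‖conjQuotSub a b‖ ≤ 2 * m / c := by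
  rcases hr.eq_or_lt with rfl | hr
  · have : a = b := by simpa [sub_eq_zero] using hab
    rw [conjQuotSub, this, sub_self, norm_zero]
    positivity
  have ha0 : 0 < ‖a‖ := (mul_pos hc hr).trans_le ha
  have hb0 : 0 < ‖b‖ := (mul_pos hc hr).trans_le hb
  rw [conjQuotSub_eq (norm_pos_iff.1 ha0) (norm_pos_iff.1 hb0)]
  have hua : ‖a - b‖ / ‖a‖ ≤ m / c := by
    rw [div_le_div_iff₀ ha0 hc]
    nlinarith
  have h1 := norm_sub_le (starRingEnd ℂ (a - b) / a) ((a - b) / a * (starRingEnd ℂ b / b))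
  have h2 := norm_conj_div_le_one b
  rw [norm_mul, norm_div, norm_div (a - b), RCLike.norm_conj] at h1
  have h3 : ‖a - b‖ / ‖a‖ * ‖starRingEnd ℂ b / b‖ ≤ ‖a - b‖ / ‖a‖ :=
    mul_le_of_le_one_right (by positivity) h2
  rw [mul_div_assoc]
  linarith

/-- Weighted increment bound for a quotient `u / a` whose numerator and denominator are
comparable to `r` and vary by `O(t)`. -/
theorem norm_div_sub_div_mul_le {u₁ u₂ a₁ a₂ : ℂ} {c m L N r₁ r₂ t : ℝ} (hc : 0 < c)
    (hr₁ : 0 < r₁) (hr₂ : 0 < r₂) (hm : 0 ≤ m)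
    (ha₁ : c * r₁ ≤ ‖a₁‖) (ha₂ : c * r₂ ≤ ‖a₂‖) (hu₂ : ‖u₂‖ ≤ m * ‖a₂‖)
    (hu : ‖u₁ - u₂‖ ≤ L * t) (ha : ‖a₁ - a₂‖ ≤ N * t) :
    ‖u₁ / a₁ - u₂ / a₂‖ * r₁ ≤ (L + m * N) / c * t := by
  have h1 : 0 < ‖a₁‖ := (mul_pos hc hr₁).trans_le ha₁
  have h2 : 0 < ‖a₂‖ := (mul_pos hc hr₂).trans_le ha₂
  have e : u₁ / a₁ - u₂ / a₂ = ((u₁ - u₂) - u₂ / a₂ * (a₁ - a₂)) / a₁ := by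
    have := norm_pos_iff.1 h1
    have := norm_pos_iff.1 h2
    field_simp
    ring
  have hq : ‖u₂ / a₂‖ ≤ m := by rwa [norm_div, div_le_iff₀ h2]
  have hnum : ‖(u₁ - u₂) - u₂ / a₂ * (a₁ - a₂)‖ ≤ (L + m * N) * t := by
    refine (norm_sub_le _ _).trans ?_
    rw [norm_mul]
    have : ‖u₂ / a₂‖ * ‖a₁ - a₂‖ ≤ m * (N * t) := by gcongr
    linarith
  have hnn := (norm_nonneg _).trans hnum
  rw [e, norm_div, div_mul_eq_mul_div, div_mul_eq_mul_div (L + m * N), div_le_div_iff₀ h1 hc]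
  calc _ ≤ (L + m * N) * t * r₁ * c := by gcongr
    _ = (L + m * N) * t * (c * r₁) := by ring
    _ ≤ _ := by gcongr

/-- Weighted increment bound for the difference of conjugate quotients. -/
theorem norm_conjQuotSub_sub_mul_le {a₁ b₁ a₂ b₂ : ℂ} {c m L r₁ r₂ t : ℝ} (hc : 0 < c)
    (hr₁ : 0 ≤ r₁) (hr₂ : 0 ≤ r₂) (hm : 0 ≤ m) (ht : 0 ≤ t) (hL : 0 ≤ L)
    (ha₁ : c * r₁ ≤ ‖a₁‖) (ha₂ : c * r₂ ≤ ‖a₂‖) (hb₁ : c * r₁ ≤ ‖b₁‖) (hb₂ : c * r₂ ≤ ‖b₂‖)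
    (hab₁ : ‖a₁ - b₁‖ ≤ m * r₁) (hab₂ : ‖a₂ - b₂‖ ≤ m * r₂)
    (ha : ‖a₁ - a₂‖ ≤ L * t) (hb : ‖b₁ - b₂‖ ≤ L * t)
    (hab : ‖(a₁ - b₁) - (a₂ - b₂)‖ ≤ m * t) (hr : r₁ ≤ r₂ + t) :
    ‖conjQuotSub a₁ b₁ - conjQuotSub a₂ b₂‖ * r₁ ≤ (4 / c + 4 * L / c ^ 2) * m * t := by
  rcases hr₁.eq_or_lt with rfl | hr₁
  · rw [mul_zero]
    positivity
  have hextra : 0 ≤ 4 * L / c ^ 2 * m * t := by positivity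
  rcases hr₂.eq_or_lt with rfl | hr₂
  · have hb2 : a₂ = b₂ := by simpa [sub_eq_zero] using hab₂
    have hz : conjQuotSub a₂ b₂ = 0 := by rw [conjQuotSub, hb2, sub_self]
    have h1 := norm_conjQuotSub_le hc hr₁.le hm ha₁ hb₁ hab₁
    rw [hz, sub_zero]
    calc _ ≤ 2 * m / c * t := by gcongr; linarith
      _ ≤ 4 / c * m * t := by
        rw [show 4 / c * m * t = 2 * (2 * m / c * t) by ring]
        linarith [show 0 ≤ 2 * m / c * t by positivity]
      _ ≤ _ := by linarith
  have hA₁ := norm_pos_iff.1 ((mul_pos hc hr₁).trans_le ha₁)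
  have hA₂ := norm_pos_iff.1 ((mul_pos hc hr₂).trans_le ha₂)
  have hB₁ := norm_pos_iff.1 ((mul_pos hc hr₁).trans_le hb₁)
  have hB₂ := norm_pos_iff.1 ((mul_pos hc hr₂).trans_le hb₂)
  have hu₂ : ‖a₂ - b₂‖ ≤ m / c * ‖a₂‖ := by
    rw [div_mul_eq_mul_div, le_div_iff₀ hc]
    nlinarith
  have e1 := norm_div_sub_div_mul_le hc hr₁ hr₂ (div_nonneg hm hc.le) ha₁ ha₂ hu₂ hab ha
  have e2 := norm_div_sub_div_mul_le (u₁ := starRingEnd ℂ (a₁ - b₁))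
    (u₂ := starRingEnd ℂ (a₂ - b₂)) hc hr₁ hr₂ (div_nonneg hm hc.le) ha₁ ha₂
    (by rwa [RCLike.norm_conj]) (by rwa [← map_sub, RCLike.norm_conj]) ha
  have e3 := norm_div_sub_div_mul_le (u₁ := starRingEnd ℂ b₁)
    (u₂ := starRingEnd ℂ b₂) hc hr₁ hr₂ zero_le_one hb₁ hb₂
    (by rw [RCLike.norm_conj, one_mul]) (by rwa [← map_sub, RCLike.norm_conj]) hb
  have hq : ‖(a₂ - b₂) / a₂‖ ≤ m / c := by
    rwa [norm_div, div_le_iff₀ (norm_pos_iff.2 hA₂)]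
  rw [conjQuotSub_eq hA₁ hB₁, conjQuotSub_eq hA₂ hB₂]
  set k₁ := starRingEnd ℂ b₁ / b₁
  set k₂ := starRingEnd ℂ b₂ / b₂
  set p₁ := starRingEnd ℂ (a₁ - b₁) / a₁
  set p₂ := starRingEnd ℂ (a₂ - b₂) / a₂
  set q₁ := (a₁ - b₁) / a₁
  set q₂ := (a₂ - b₂) / a₂
  have hk : ‖k₁‖ ≤ 1 := norm_conj_div_le_one b₁
  have htri : ‖p₁ - q₁ * k₁ - (p₂ - q₂ * k₂)‖ ≤
      ‖p₁ - p₂‖ + ‖q₁ - q₂‖ + m / c * ‖k₁ - k₂‖ := by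
    rw [show p₁ - q₁ * k₁ - (p₂ - q₂ * k₂) =
      (p₁ - p₂) - (q₁ - q₂) * k₁ - q₂ * (k₁ - k₂) by ring]
    refine (norm_sub_le _ _).trans (add_le_add ((norm_sub_le _ _).trans (add_le_add le_rfl ?_)) ?_)
    · rw [norm_mul]
      exact mul_le_of_le_one_right (norm_nonneg _) hk
    · rw [norm_mul]
      gcongr
  calc _ ≤ (‖p₁ - p₂‖ + ‖q₁ - q₂‖ + m / c * ‖k₁ - k₂‖) * r₁ := by gcongr
    _ = ‖p₁ - p₂‖ * r₁ + ‖q₁ - q₂‖ * r₁ + m / c * (‖k₁ - k₂‖ * r₁) := by ring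
    _ ≤ (m + m / c * L) / c * t + (m + m / c * L) / c * t +
        m / c * ((L + 1 * L) / c * t) := by gcongr
    _ = (2 / c + 4 * L / c ^ 2) * m * t := by field_simp; ring
    _ ≤ _ := by gcongr; norm_num

/-- The boundary map `Φ_f(w) = w + Q/w + f(w)`. -/
noncomputable def boundaryMap (Q : ℝ) (f : ℂ → ℂ) (w : ℂ) : ℂ := w + (Q : ℂ) / w + f w

theorem boundaryMap_sub {Q : ℝ} {f : ℂ → ℂ} {ξ w : ℂ} (hξ : ξ ∈ sphere (0 : ℂ) 1)
    (hw : w ∈ sphere (0 : ℂ) 1) :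
    boundaryMap Q f ξ - boundaryMap Q f w = (ξ - w) * (1 - Q / (ξ * w)) + (f ξ - f w) := by
  have hξ0 : ξ ≠ 0 := ne_of_mem_sphere hξ one_ne_zero
  have hw0 : w ≠ 0 := ne_of_mem_sphere hw one_ne_zero
  rw [boundaryMap, boundaryMap]
  field_simp
  ring

theorem norm_ofReal_div_mul_of_mem_sphere {Q : ℝ} (hQ : 0 ≤ Q) {ξ w : ℂ}
    (hξ : ξ ∈ sphere (0 : ℂ) 1) (hw : w ∈ sphere (0 : ℂ) 1) : ‖(Q : ℂ) / (ξ * w)‖ = Q := by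
  rw [mem_sphere_zero_iff_norm] at hξ hw
  simp [hξ, hw, abs_of_nonneg hQ]

theorem le_norm_boundaryMap_sub {Q ε : ℝ} {f : ℂ → ℂ} (hQ : Q ∈ Ioc 0 ε) {ξ w : ℂ}
    (hξ : ξ ∈ sphere (0 : ℂ) 1) (hw : w ∈ sphere (0 : ℂ) 1)
    (hf : ‖f ξ - f w‖ ≤ (1 - ε) / 2 * ‖ξ - w‖) :
    (1 - ε) / 2 * ‖ξ - w‖ ≤ ‖boundaryMap Q f ξ - boundaryMap Q f w‖ := by
  have h1 := norm_sub_norm_le (1 : ℂ) (Q / (ξ * w))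
  rw [norm_ofReal_div_mul_of_mem_sphere hQ.1.le hξ hw, norm_one] at h1
  have h2 : (1 - ε) * ‖ξ - w‖ ≤ ‖(ξ - w) * (1 - Q / (ξ * w))‖ := by
    rw [norm_mul, mul_comm]
    gcongr
    linarith [hQ.2]
  rw [boundaryMap_sub hξ hw]
  have h3 := norm_sub_le_norm_add ((ξ - w) * (1 - Q / (ξ * w))) (f ξ - f w)
  linarith

theorem norm_boundaryMap_sub_le {Q ε : ℝ} {f : ℂ → ℂ} (hε : ε ∈ Ioo (0 : ℝ) 1)
    (hQ : Q ∈ Ioc 0 ε) {ξ w : ℂ}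
    (hξ : ξ ∈ sphere (0 : ℂ) 1) (hw : w ∈ sphere (0 : ℂ) 1)
    (hf : ‖f ξ - f w‖ ≤ (1 - ε) / 2 * ‖ξ - w‖) :
    ‖boundaryMap Q f ξ - boundaryMap Q f w‖ ≤ 3 * ‖ξ - w‖ := by
  have h1 := norm_sub_le (1 : ℂ) (Q / (ξ * w))
  rw [norm_ofReal_div_mul_of_mem_sphere hQ.1.le hξ hw, norm_one] at h1
  have h2 : ‖(ξ - w) * (1 - Q / (ξ * w))‖ ≤ 2 * ‖ξ - w‖ := by
    rw [norm_mul, mul_comm]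
    gcongr
    linarith [hQ.2, hε.2]
  have h3 : (1 - ε) / 2 * ‖ξ - w‖ ≤ 1 * ‖ξ - w‖ := by
    gcongr
    linarith [hε.1]
  rw [boundaryMap_sub hξ hw]
  refine (norm_add_le _ _).trans ?_
  linarith

theorem circleIntegrable_conj_div_mul {Q : ℝ} {f h' : ℂ → ℂ}
    (hf : ContinuousOn f (closedBall (0 : ℂ) 1)) (hh : ContinuousOn h' (closedBall (0 : ℂ) 1))
    {M : ℝ} (hM : ∀ ξ ∈ sphere (0 : ℂ) 1, ‖h' ξ‖ ≤ M) (w : ℂ) :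
    CircleIntegrable (fun ξ => starRingEnd ℂ (boundaryMap Q f ξ - boundaryMap Q f w) /
      (boundaryMap Q f ξ - boundaryMap Q f w) * h' ξ) 0 1 := by
  have hmem : ∀ θ : ℝ, circleMap 0 1 θ ∈ closedBall (0 : ℂ) 1 :=
    fun θ => circleMap_mem_closedBall 0 zero_le_one θ
  have hfc : Continuous fun θ : ℝ => f (circleMap 0 1 θ) :=
    hf.comp_continuous (continuous_circleMap 0 1) hmem
  have hhc : Continuous fun θ : ℝ => h' (circleMap 0 1 θ) :=
    hh.comp_continuous (continuous_circleMap 0 1) hmem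
  have hPhi : Continuous fun θ : ℝ => boundaryMap Q f (circleMap 0 1 θ) - boundaryMap Q f w := by
    unfold boundaryMap
    have hcm : Continuous (circleMap 0 1) := continuous_circleMap 0 1
    have hne : ∀ θ : ℝ, circleMap 0 1 θ ≠ 0 := fun θ => circleMap_ne_center one_ne_zero
    exact ((hcm.add (continuous_const.div hcm hne)).add hfc).sub continuous_const
  refine (intervalIntegrable_const (c := M)).mono_fun (Measurable.aestronglyMeasurable ?_)
    (Filter.Eventually.of_forall fun θ => ?_)
  · exact ((continuous_conj.comp hPhi).measurable.div hPhi.measurable).mul hhc.measurable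
  · have hs := hM _ (circleMap_mem_sphere 0 zero_le_one θ)
    beta_reduce
    rw [norm_mul, Real.norm_of_nonneg ((norm_nonneg _).trans hs)]
    exact (mul_le_of_le_one_left (norm_nonneg _) (norm_conj_div_le_one _)).trans hs

/-- The increment of `I₁` in `f` as a single circle integral. -/
theorem I1Int_sub_eq {Q : ℝ} {f g h' : ℂ → ℂ}
    (hf : ContinuousOn f (closedBall (0 : ℂ) 1)) (hg : ContinuousOn g (closedBall (0 : ℂ) 1))
    (hh : ContinuousOn h' (closedBall (0 : ℂ) 1))
    {M : ℝ} (hM : ∀ ξ ∈ sphere (0 : ℂ) 1, ‖h' ξ‖ ≤ M) (w : ℂ) :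
    CircleIntegrable (fun ξ => conjQuotSub (boundaryMap Q f ξ - boundaryMap Q f w)
      (boundaryMap Q g ξ - boundaryMap Q g w) * h' ξ) 0 1 ∧
    I1Int Q f h' w - I1Int Q g h' w =
      (∮ ξ in C(0, 1), conjQuotSub (boundaryMap Q f ξ - boundaryMap Q f w)
        (boundaryMap Q g ξ - boundaryMap Q g w) * h' ξ) / (2 * Real.pi * I) := by
  have h1 := circleIntegrable_conj_div_mul (Q := Q) hf hh hM w
  have h2 := circleIntegrable_conj_div_mul (Q := Q) hg hh hM w
  simp only [conjQuotSub, sub_mul]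
  refine ⟨h1.sub h2, ?_⟩
  rw [circleIntegral.integral_sub h1 h2, sub_div]
  simp only [I1Int, boundaryMap, map_sub]

theorem norm_div_two_pi_I_le (z : ℂ) : ‖z / (2 * Real.pi * I)‖ ≤ ‖z‖ := by
  have hπ : 1 ≤ 2 * Real.pi := by linarith [Real.pi_gt_three]
  rw [norm_div]
  refine div_le_self (norm_nonneg _) ?_
  simpa [abs_of_pos Real.pi_pos] using hπ

/-- Lipschitz dependence of `I₁` on `f`: for `ε, α ∈ (0,1)` there is
`C = C(ε,α)` such that for every `Q ∈ (0,ε]` and all `f, g` holomorphic on the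
disc, with `f, f', g, g'` continuous up to the boundary and
`sup_{|z|≤1}|f'|, sup_{|z|≤1}|g'| ≤ (1-ε)/2`, and every `h` holomorphic on the
disc with `h'` continuous up to the boundary,
`‖I₁(f)h - I₁(g)h‖_{C^α(𝕋)} ≤ C·(sup_{|z|≤1}|f' - g'|)·(sup_{ξ∈𝕋}|h'|)`. -/
theorem I1_lipschitz_in_f (ε α : ℝ) (hε : ε ∈ Set.Ioo (0:ℝ) 1)
    (hα : α ∈ Set.Ioo (0:ℝ) 1) :
    ∃ C : ℝ, 0 < C ∧
    ∀ (Q : ℝ), Q ∈ Set.Ioc (0:ℝ) ε →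
    ∀ (f f' g g' h h' : ℂ → ℂ),
      DifferentiableOn ℂ f (ball (0:ℂ) 1) →
      ContinuousOn f (closedBall (0:ℂ) 1) →
      (∀ z ∈ ball (0:ℂ) 1, HasDerivAt f (f' z) z) →
      ContinuousOn f' (closedBall (0:ℂ) 1) →
      (∀ z ∈ closedBall (0:ℂ) 1, ‖f' z‖ ≤ (1 - ε) / 2) →
      DifferentiableOn ℂ g (ball (0:ℂ) 1) →
      ContinuousOn g (closedBall (0:ℂ) 1) →
      (∀ z ∈ ball (0:ℂ) 1, HasDerivAt g (g' z) z) →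
      ContinuousOn g' (closedBall (0:ℂ) 1) →
      (∀ z ∈ closedBall (0:ℂ) 1, ‖g' z‖ ≤ (1 - ε) / 2) →
      DifferentiableOn ℂ h (ball (0:ℂ) 1) →
      (∀ z ∈ ball (0:ℂ) 1, HasDerivAt h (h' z) z) →
      ContinuousOn h' (closedBall (0:ℂ) 1) →
      ∀ M₁ : ℝ, (∀ z ∈ closedBall (0:ℂ) 1, ‖f' z - g' z‖ ≤ M₁) →
      ∀ M : ℝ, (∀ ξ ∈ sphere (0:ℂ) 1, ‖h' ξ‖ ≤ M) →
      (∀ w ∈ sphere (0:ℂ) 1,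
        ‖I1Int Q f h' w - I1Int Q g h' w‖ ≤ C * M₁ * M) ∧
      (∀ w₁ ∈ sphere (0:ℂ) 1, ∀ w₂ ∈ sphere (0:ℂ) 1,
        ‖(I1Int Q f h' w₁ - I1Int Q g h' w₁)
            - (I1Int Q f h' w₂ - I1Int Q g h' w₂)‖
          ≤ C * M₁ * M * ‖w₁ - w₂‖ ^ α) := by
  set c : ℝ := (1 - ε) / 2
  have hc : 0 < c := half_pos (sub_pos.2 hε.2)
  set K : ℝ := ∫ θ in (0 : ℝ)..2 * Real.pi, ‖circleMap 0 1 θ - 1‖ ^ (-α)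
  have hK : 0 ≤ K := intervalIntegral.integral_nonneg Real.two_pi_pos.le fun θ _ => by positivity
  set A : ℝ := 4 / c + 4 * 3 / c ^ 2
  have hA : 0 < A := by positivity
  have hA' : 4 / c ≤ A := le_add_of_nonneg_right (by positivity)
  refine ⟨A * (2 * Real.pi + K), by positivity, ?_⟩
  intro Q hQ f f' g g' h h' _ hfc hfd _ hfb _ hgc hgd _ hgb _ _ hh M₁ hM₁ M hM
  have h0 : (1 : ℂ) ∈ sphere (0 : ℂ) 1 := by simp
  have hsub : ∀ {z : ℂ}, z ∈ sphere (0 : ℂ) 1 → z ∈ closedBall (0 : ℂ) 1 :=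
    fun hz => sphere_subset_closedBall hz
  have hM₁0 : 0 ≤ M₁ := (norm_nonneg _).trans (hM₁ 1 (hsub h0))
  have hM0 : 0 ≤ M := (norm_nonneg _).trans (hM 1 h0)
  have hfL : ∀ {z w : ℂ}, z ∈ sphere (0 : ℂ) 1 → w ∈ sphere (0 : ℂ) 1 →
      ‖f z - f w‖ ≤ c * ‖z - w‖ :=
    fun hz hw => norm_sub_le_of_hasDerivAt_ball hfc hfd hfb (hsub hz) (hsub hw)
  have hgL : ∀ {z w : ℂ}, z ∈ sphere (0 : ℂ) 1 → w ∈ sphere (0 : ℂ) 1 →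
      ‖g z - g w‖ ≤ c * ‖z - w‖ :=
    fun hz hw => norm_sub_le_of_hasDerivAt_ball hgc hgd hgb (hsub hz) (hsub hw)
  have hdL : ∀ {z w : ℂ}, z ∈ sphere (0 : ℂ) 1 → w ∈ sphere (0 : ℂ) 1 →
      ‖(boundaryMap Q f z - boundaryMap Q f w) - (boundaryMap Q g z - boundaryMap Q g w)‖
        ≤ M₁ * ‖z - w‖ := by
    intro z w hz hw
    have := norm_sub_le_of_hasDerivAt_ball (f := fun z => f z - g z) (f' := fun z => f' z - g' z)
      (hfc.sub hgc) (fun z hz => (hfd z hz).sub (hgd z hz)) hM₁ (hsub hz) (hsub hw)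
    convert this using 2
    simp only [boundaryMap]
    ring
  have hsup : ∀ {ξ w : ℂ}, ξ ∈ sphere (0 : ℂ) 1 → w ∈ sphere (0 : ℂ) 1 →
      ‖conjQuotSub (boundaryMap Q f ξ - boundaryMap Q f w)
        (boundaryMap Q g ξ - boundaryMap Q g w)‖ ≤ 2 * M₁ / c := fun hξ hw =>
    norm_conjQuotSub_le hc (norm_nonneg _) hM₁0 (le_norm_boundaryMap_sub hQ hξ hw (hfL hξ hw))
      (le_norm_boundaryMap_sub hQ hξ hw (hgL hξ hw)) (hdL hξ hw)
  have h24 : 2 * M₁ / c + 2 * M₁ / c ≤ A * M₁ := by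
    calc _ = 4 / c * M₁ := by ring
      _ ≤ _ := by gcongr
  have h2 : 2 * M₁ / c ≤ A * M₁ := by
    have : 0 ≤ 2 * M₁ / c := by positivity
    linarith
  constructor
  · intro w hw
    rw [(I1Int_sub_eq hfc hgc hh hM w).2]
    refine (norm_div_two_pi_I_le _).trans ?_
    refine (circleIntegral.norm_integral_le_of_norm_le_const (C := A * M₁ * M) zero_le_one
      fun ξ hξ => ?_).trans ?_
    · rw [norm_mul]
      exact mul_le_mul ((hsup hξ hw).trans h2) (hM ξ hξ) (norm_nonneg _) (by positivity)
    · rw [show A * (2 * Real.pi + K) * M₁ * M =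
        2 * Real.pi * 1 * (A * M₁ * M) + K * (A * M₁ * M) by ring]
      exact le_add_of_nonneg_right (by positivity)
  · intro w₁ hw₁ w₂ hw₂
    obtain ⟨hi₁, he₁⟩ := I1Int_sub_eq (Q := Q) hfc hgc hh hM w₁
    obtain ⟨hi₂, he₂⟩ := I1Int_sub_eq (Q := Q) hfc hgc hh hM w₂
    rw [he₁, he₂, ← sub_div, ← circleIntegral.integral_sub hi₁ hi₂]
    refine (norm_div_two_pi_I_le _).trans ?_
    refine (norm_circleIntegral_le_of_mul_rpow_le hα (B := A * M₁ * ‖w₁ - w₂‖ ^ α * M) hw₁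
      fun ξ hξ => ?_).trans ?_
    · rw [← sub_mul, norm_mul, mul_right_comm]
      refine mul_le_mul ?_ (hM ξ hξ) (norm_nonneg _) (by positivity)
      refine mul_rpow_le_of_le_of_mul_le hα (norm_nonneg _) (norm_nonneg _) (norm_nonneg _)
        ((norm_sub_le _ _).trans ((add_le_add (hsup hξ hw₁) (hsup hξ hw₂)).trans h24)) ?_
      refine norm_conjQuotSub_sub_mul_le (r₂ := ‖ξ - w₂‖) hc (norm_nonneg _) (norm_nonneg _) hM₁0
        (norm_nonneg _) (by norm_num)
        (le_norm_boundaryMap_sub hQ hξ hw₁ (hfL hξ hw₁))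
        (le_norm_boundaryMap_sub hQ hξ hw₂ (hfL hξ hw₂))
        (le_norm_boundaryMap_sub hQ hξ hw₁ (hgL hξ hw₁))
        (le_norm_boundaryMap_sub hQ hξ hw₂ (hgL hξ hw₂)) (hdL hξ hw₁) (hdL hξ hw₂) ?_ ?_ ?_ ?_
      · rw [sub_sub_sub_cancel_left, norm_sub_rev w₁]
        exact norm_boundaryMap_sub_le hε hQ hw₂ hw₁ (hfL hw₂ hw₁)
      · rw [sub_sub_sub_cancel_left, norm_sub_rev w₁]
        exact norm_boundaryMap_sub_le hε hQ hw₂ hw₁ (hgL hw₂ hw₁)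
      · rw [norm_sub_rev w₁, sub_sub_sub_comm, sub_sub_sub_cancel_left, sub_sub_sub_cancel_left]
        exact hdL hw₂ hw₁
      · rw [norm_sub_rev w₁, ← sub_add_sub_cancel ξ w₂ w₁]
        exact norm_add_le _ _
    · rw [show A * (2 * Real.pi + K) * M₁ * M * ‖w₁ - w₂‖ ^ α =
        A * M₁ * ‖w₁ - w₂‖ ^ α * M * K + 2 * Real.pi * (A * M₁ * ‖w₁ - w₂‖ ^ α * M) by ring]
      exact le_add_of_nonneg_right (by positivity)
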